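/- Proposition 3: Let n ≥ 3 and let ψ be a pure n-qubit state satisfying the preferred-basis condition (all single-qubit transverse Bloch components b^{(q)}_1(ρ_ψ), b^{(q)}_2(ρ_ψ) vanish). Suppose ψ is a product over some partition of the n qubits into k nonempty blocks P₁, …, P_k of sizes r₁, …, r_k (so r₁ + … + r_k = n). Then M(ρ_ψ) ≤ Σ_{m=1}^{k} C(r_m, 2) + d, where d is the number of indices m with r_m = 2. -/

import Mathlib

noncomputable def pauli : ℕ → Matrix (Fin 2) (Fin 2) ℂ
  | 1 => !![0, 1; 1, 0]
  | 2 => !![0, -Complex.I; Complex.I, 0]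
  | 3 => !![1, 0; 0, -1]
  | _ => 1

/-- The `ι`-fold Kronecker product of single-qubit operators `pauli (f k)`. -/
noncomputable def kronOp {ι : Type*} [Fintype ι] [DecidableEq ι] (f : ι → ℕ) :
    Matrix (ι → Fin 2) (ι → Fin 2) ℂ :=
  Matrix.of fun x y => ∏ k, pauli (f k) (x k) (y k)

/-- Two-body correlation `T^{kl}_{ij}(ρ)`. -/
noncomputable def corr {ι : Type*} [Fintype ι] [DecidableEq ι]
    (ρ : Matrix (ι → Fin 2) (ι → Fin 2) ℂ) (k l : ι) (i j : ℕ) : ℝ :=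
  ((ρ * kronOp (fun q => if q = k then i else if q = l then j else 0)).trace).re

/-- Single-qubit Bloch vector component `b^{(q)}_i(ρ)`. -/
noncomputable def bloch {ι : Type*} [Fintype ι] [DecidableEq ι]
    (ρ : Matrix (ι → Fin 2) (ι → Fin 2) ℂ) (q : ι) (i : ℕ) : ℝ :=
  ((ρ * kronOp (fun p => if p = q then i else 0)).trace).re

/-- `M_{kl}(ρ)`. -/
noncomputable def Mkl {ι : Type*} [Fintype ι] [DecidableEq ι]
    (ρ : Matrix (ι → Fin 2) (ι → Fin 2) ℂ) (k l : ι) : ℝ :=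
  ∑ i ∈ Finset.Icc 1 2, ∑ j ∈ Finset.Icc 1 2, (corr ρ k l i j) ^ 2

/-- `M(ρ) = Σ_{k<l} M_{kl}(ρ)`. -/
noncomputable def Mtot {ι : Type*} [Fintype ι] [LinearOrder ι]
    (ρ : Matrix (ι → Fin 2) (ι → Fin 2) ℂ) : ℝ :=
  ∑ p ∈ Finset.univ.filter (fun p : ι × ι => p.1 < p.2), Mkl ρ p.1 p.2

/-- Density matrix of a pure state `ψ`: `ρ_ψ = ψ ψ†`. -/
noncomputable def pureDensity {ι : Type*} [Fintype ι] [DecidableEq ι]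
    (ψ : (ι → Fin 2) → ℂ) : Matrix (ι → Fin 2) (ι → Fin 2) ℂ :=
  Matrix.of fun x y => ψ x * (starRingEnd ℂ) (ψ y)

/-- `ψ` is a unit vector. -/
def UnitVec {ι : Type*} [Fintype ι] [DecidableEq ι] (ψ : (ι → Fin 2) → ℂ) : Prop :=
  ∑ x, Complex.normSq (ψ x) = 1

/-- Preferred-basis condition: all transverse Bloch components vanish. -/
def PreferredBasis {ι : Type*} [Fintype ι] [DecidableEq ι]
    (ρ : Matrix (ι → Fin 2) (ι → Fin 2) ℂ) : Prop :=
  ∀ q : ι, bloch ρ q 1 = 0 ∧ bloch ρ q 2 = 0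

/-- `P` is a partition of `Fin n` into `k` nonempty blocks. -/
def IsPartition {n k : ℕ} (P : Fin k → Finset (Fin n)) : Prop :=
  (∀ m, (P m).Nonempty) ∧ (∀ m m', m ≠ m' → Disjoint (P m) (P m')) ∧
    ∀ q : Fin n, ∃ m, q ∈ P m

/-- Restriction of an `n`-bit string to a block of qubits. -/
def restrictB {n : ℕ} (S : Finset (Fin n)) (f : Fin n → Fin 2) : (↥S → Fin 2) :=
  fun q => f q.val

/-- `ψ` is the tensor product, under the canonical qubit-reordering isomorphism,
of pure states on the blocks of `P`. -/
def IsProductOver {n k : ℕ} (ψ : (Fin n → Fin 2) → ℂ) (P : Fin k → Finset (Fin n)) : Prop :=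
  ∃ φ : (m : Fin k) → ((↥(P m) → Fin 2) → ℂ),
    (∀ m, UnitVec (φ m)) ∧ ∀ f : Fin n → Fin 2, ψ f = ∏ m, φ m (restrictB (P m) f)

open scoped ComplexOrder
open Matrix

section helpers
variable {ι : Type*} [Fintype ι] [DecidableEq ι]

lemma kronOp_mul_apply (f g : ι → ℕ) (x z : ι → Fin 2) :
    (kronOp f * kronOp g) x z = ∏ k, (pauli (f k) * pauli (g k)) (x k) (z k) := by
  simp only [Matrix.mul_apply, kronOp, Matrix.of_apply, ← Finset.prod_mul_distrib]
  rw [Finset.prod_univ_sum]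
  simp [Fintype.piFinset_univ]

lemma pauli_conjTranspose (i : ℕ) : (pauli i)ᴴ = pauli i := by
  rcases i with _ | _ | _ | _ | i
  · simp [pauli]
  · ext a b; fin_cases a <;> fin_cases b <;> simp [pauli]
  · ext a b; fin_cases a <;> fin_cases b <;> simp [pauli]
  · ext a b; fin_cases a <;> fin_cases b <;> simp [pauli]
  · simp [pauli]

lemma pauli_sq (i : ℕ) : pauli i * pauli i = 1 := by
  rcases i with _ | _ | _ | _ | i
  · simp [pauli]
  · ext a b; fin_cases a <;> fin_cases b <;> simp [pauli]
  · ext a b; fin_cases a <;> fin_cases b <;> simp [pauli]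
  · ext a b; fin_cases a <;> fin_cases b <;> simp [pauli]
  · simp [pauli]

lemma pauli_zero : pauli 0 = 1 := rfl

lemma pauli_one_two : pauli 1 * pauli 2 = -(pauli 2 * pauli 1) := by
  ext a b; fin_cases a <;> fin_cases b <;> simp [pauli]

lemma pauli_two_one : pauli 2 * pauli 1 = -(pauli 1 * pauli 2) := by
  rw [pauli_one_two, neg_neg]

lemma kronOp_conjTranspose (f : ι → ℕ) : (kronOp f)ᴴ = kronOp f := by
  ext x y
  simp only [Matrix.conjTranspose_apply, kronOp, Matrix.of_apply, star_prod]
  refine Finset.prod_congr rfl fun k _ => ?_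
  conv_rhs => rw [← pauli_conjTranspose]
  rfl

lemma kronOp_sq (f : ι → ℕ) : kronOp f * kronOp f = 1 := by
  ext x z
  rw [kronOp_mul_apply]
  simp only [pauli_sq, Matrix.one_apply]
  rw [Finset.prod_ite_zero]
  simp [funext_iff]

lemma kronOp_zero : kronOp (fun _ : ι => 0) = 1 := by
  ext x z
  simp only [kronOp, Matrix.of_apply, pauli_zero, Matrix.one_apply]
  rw [Finset.prod_ite_zero]
  simp [funext_iff]

lemma kronOp_anti (f g : ι → ℕ) (a : ι)
    (ha : pauli (f a) * pauli (g a) = -(pauli (g a) * pauli (f a)))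
    (h : ∀ q, q ≠ a → pauli (f q) * pauli (g q) = pauli (g q) * pauli (f q)) :
    kronOp f * kronOp g = -(kronOp g * kronOp f) := by
  ext x z
  rw [Matrix.neg_apply, kronOp_mul_apply, kronOp_mul_apply,
    ← Finset.mul_prod_erase _ _ (Finset.mem_univ a), ← Finset.mul_prod_erase _ _ (Finset.mem_univ a),
    ha, Matrix.neg_apply, neg_mul]
  congr 2
  refine Finset.prod_congr rfl fun q hq => ?_
  rw [h q (Finset.ne_of_mem_erase hq)]

/-- complex expectation value -/
noncomputable def expv (ψ : (ι → Fin 2) → ℂ) (f : ι → ℕ) : ℂ :=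
  star ψ ⬝ᵥ (kronOp f *ᵥ ψ)

lemma trace_eq_expv (ψ : (ι → Fin 2) → ℂ) (f : ι → ℕ) :
    (pureDensity ψ * kronOp f).trace = expv ψ f := by
  have : pureDensity ψ = Matrix.vecMulVec ψ (star ψ) := by
    ext x y; simp [pureDensity, Matrix.vecMulVec_apply]
  rw [this, Matrix.trace_mul_comm, Matrix.mul_vecMulVec, Matrix.trace_vecMulVec, dotProduct_comm]
  rfl

lemma expv_star (ψ : (ι → Fin 2) → ℂ) (f : ι → ℕ) : star (expv ψ f) = expv ψ f := by
  unfold expv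
  rw [← Matrix.star_dotProduct, Matrix.star_mulVec, kronOp_conjTranspose,
    ← Matrix.dotProduct_mulVec]

lemma expv_im (ψ : (ι → Fin 2) → ℂ) (f : ι → ℕ) : (expv ψ f).im = 0 :=
  Complex.conj_eq_iff_im.mp (expv_star ψ f)

lemma expv_zero (ψ : (ι → Fin 2) → ℂ) (hψ : UnitVec ψ) : expv ψ (fun _ => 0) = 1 := by
  unfold expv
  rw [kronOp_zero, Matrix.one_mulVec]
  unfold UnitVec at hψ
  have : ((∑ x, Complex.normSq (ψ x) : ℝ) : ℂ) = 1 := by rw [hψ]; simp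
  rw [← this]
  simp [dotProduct, Complex.normSq_eq_conj_mul_self]

lemma bessel {κ : Type*} [Fintype κ] [DecidableEq κ] (ψ : (ι → Fin 2) → ℂ) (hψ : UnitVec ψ)
    (F : κ → ι → ℕ)
    (h : ∀ a b, a ≠ b → kronOp (F a) * kronOp (F b) = -(kronOp (F b) * kronOp (F a))) :
    ∑ a, (expv ψ (F a)).re ^ 2 ≤ 1 := by
  set s : ℝ := ∑ a, (expv ψ (F a)).re ^ 2 with hs
  set c : κ → ℂ := fun a => ((expv ψ (F a)).re : ℂ) with hc
  have hce : ∀ a, expv ψ (F a) = c a := fun a => by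
    apply Complex.ext <;> simp [hc, expv_im]
  set B := ∑ a, c a • kronOp (F a) with hB
  have hBB : B * B = (s : ℂ) • (1 : Matrix (ι → Fin 2) (ι → Fin 2) ℂ) := by
    have h1 : B * B = ∑ a, ∑ b, (c a * c b) • (kronOp (F a) * kronOp (F b)) := by
      rw [hB, Finset.sum_mul]
      refine Finset.sum_congr rfl fun a _ => ?_
      rw [Finset.mul_sum]
      refine Finset.sum_congr rfl fun b _ => ?_
      rw [smul_mul_smul_comm]
    have h2 : B * B = ∑ a, ∑ b, (c a * c b) • (kronOp (F b) * kronOp (F a)) := by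
      rw [h1, Finset.sum_comm]
      refine Finset.sum_congr rfl fun a _ => Finset.sum_congr rfl fun b _ => ?_
      rw [mul_comm (c b)]
    have h3 : B * B + B * B = (2 * s : ℂ) • (1 : Matrix (ι → Fin 2) (ι → Fin 2) ℂ) := by
      conv_lhs => rw [h2]; arg 2; rw [← h2, h1]
      simp only [← Finset.sum_add_distrib, ← smul_add]
      have : ∀ a b, (c a * c b) • (kronOp (F b) * kronOp (F a) + kronOp (F a) * kronOp (F b))
          = if a = b then (2 * c a ^ 2) • (1 : Matrix (ι → Fin 2) (ι → Fin 2) ℂ) else 0 := by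
        intro a b
        split_ifs with hab
        · subst hab
          rw [kronOp_sq, ← two_smul ℂ (1 : Matrix (ι → Fin 2) (ι → Fin 2) ℂ), smul_smul]
          congr 1; ring
        · rw [h a b hab, add_neg_cancel, smul_zero]
      simp only [this, Finset.sum_ite_eq, Finset.mem_univ, if_true]
      rw [← Finset.sum_smul, ← Finset.mul_sum]
      congr 2
      simp [hs, hc]
    have h4 : (2 : ℂ) • (B * B) = (2 : ℂ) • ((s : ℂ) • (1 : Matrix (ι → Fin 2) (ι → Fin 2) ℂ)) := by
      rw [two_smul, h3, smul_smul]
    exact smul_right_injective _ (two_ne_zero (α := ℂ)) h4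
  have hBs : Bᴴ = B := by
    simp [hB, Matrix.conjTranspose_sum, Matrix.conjTranspose_smul, kronOp_conjTranspose, hc]
  have hN : star ψ ⬝ᵥ ψ = 1 := by
    have := expv_zero ψ hψ
    unfold expv at this
    rwa [kronOp_zero, Matrix.one_mulVec] at this
  have hE : star ψ ⬝ᵥ (B *ᵥ ψ) = s := by
    rw [hB, Matrix.sum_mulVec, dotProduct_sum]
    simp only [Matrix.smul_mulVec, dotProduct_smul]
    have : ∀ a, star ψ ⬝ᵥ (kronOp (F a) *ᵥ ψ) = c a := hce
    simp [this, hs, hc, pow_two]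
  have hE2 : star (B *ᵥ ψ) ⬝ᵥ ψ = s := by
    rw [Matrix.star_mulVec, hBs, ← Matrix.dotProduct_mulVec, hE]
  have hE3 : star (B *ᵥ ψ) ⬝ᵥ (B *ᵥ ψ) = s := by
    rw [Matrix.star_mulVec, hBs, ← Matrix.dotProduct_mulVec, Matrix.mulVec_mulVec, hBB,
      Matrix.smul_mulVec, Matrix.one_mulVec, dotProduct_smul, hN]
    simp
  have hpos : 0 ≤ star (ψ - B *ᵥ ψ) ⬝ᵥ (ψ - B *ᵥ ψ) := dotProduct_star_self_nonneg _
  rw [star_sub, sub_dotProduct, dotProduct_sub, dotProduct_sub, hN, hE, hE2, hE3] at hpos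
  have : (0 : ℂ) ≤ ((1 - s : ℝ) : ℂ) := by
    convert hpos using 1; push_cast; ring
  have := Complex.zero_le_real.mp this
  linarith

/-- two-body Pauli index function -/
def pairF (k l : ι) (i j : ℕ) : ι → ℕ := fun q => if q = k then i else if q = l then j else 0

lemma corr_eq (ψ : (ι → Fin 2) → ℂ) (k l : ι) (i j : ℕ) :
    corr (pureDensity ψ) k l i j = (expv ψ (pairF k l i j)).re := by
  unfold corr
  rw [trace_eq_expv]; rfl

lemma anti_same (k l : ι) (hkl : k ≠ l) (i j j' : ℕ)
    (hj : pauli j * pauli j' = -(pauli j' * pauli j)) :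
    kronOp (pairF k l i j) * kronOp (pairF k l i j')
      = -(kronOp (pairF k l i j') * kronOp (pairF k l i j)) := by
  apply kronOp_anti _ _ l
  · simpa [pairF, hkl.symm] using hj
  · intro q hq
    simp [pairF, hq]

lemma anti_diff (k l p : ι) (hkl : k ≠ l) (hkp : k ≠ p) (hlp : l ≠ p) (i i' j j' : ℕ)
    (hi : pauli i * pauli i' = -(pauli i' * pauli i)) :
    kronOp (pairF k l i j) * kronOp (pairF k p i' j')
      = -(kronOp (pairF k p i' j') * kronOp (pairF k l i j)) := by
  apply kronOp_anti _ _ k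
  · simpa [pairF] using hi
  · intro q hq
    by_cases h1 : q = l
    · subst h1; simp [pairF, hq, hlp, pauli_zero]
    · simp [pairF, hq, h1, pauli_zero]

lemma four_bound (ψ : (ι → Fin 2) → ℂ) (hψ : UnitVec ψ) (k l p : ι)
    (hkl : k ≠ l) (hkp : k ≠ p) (hlp : l ≠ p) (i i' : ℕ)
    (h1 : pauli i * pauli i' = -(pauli i' * pauli i))
    (h2 : pauli i' * pauli i = -(pauli i * pauli i')) :
    (corr (pureDensity ψ) k l i 1) ^ 2 + (corr (pureDensity ψ) k l i 2) ^ 2 +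
    (corr (pureDensity ψ) k p i' 1) ^ 2 + (corr (pureDensity ψ) k p i' 2) ^ 2 ≤ 1 := by
  have := bessel ψ hψ ![pairF k l i 1, pairF k l i 2, pairF k p i' 1, pairF k p i' 2] (by
    intro a b hab
    fin_cases a <;> fin_cases b
    · exact absurd rfl hab
    · exact anti_same k l hkl i _ _ pauli_one_two
    · exact anti_diff k l p hkl hkp hlp i i' 1 1 h1
    · exact anti_diff k l p hkl hkp hlp i i' 1 2 h1
    · exact anti_same k l hkl i _ _ pauli_two_one
    · exact absurd rfl hab
    · exact anti_diff k l p hkl hkp hlp i i' 2 1 h1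
    · exact anti_diff k l p hkl hkp hlp i i' 2 2 h1
    · exact anti_diff k p l hkp hkl hlp.symm i' i 1 1 h2
    · exact anti_diff k p l hkp hkl hlp.symm i' i 1 2 h2
    · exact absurd rfl hab
    · exact anti_same k p hkp i' _ _ pauli_one_two
    · exact anti_diff k p l hkp hkl hlp.symm i' i 2 1 h2
    · exact anti_diff k p l hkp hkl hlp.symm i' i 2 2 h2
    · exact anti_same k p hkp i' _ _ pauli_two_one
    · exact absurd rfl hab)
  simpa [Fin.sum_univ_four, corr_eq] using this

lemma Mkl_expand (ρ : Matrix (ι → Fin 2) (ι → Fin 2) ℂ) (k l : ι) :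
    Mkl ρ k l = (corr ρ k l 1 1) ^ 2 + (corr ρ k l 1 2) ^ 2 +
      ((corr ρ k l 2 1) ^ 2 + (corr ρ k l 2 2) ^ 2) := by
  have : Finset.Icc 1 2 = ({1, 2} : Finset ℕ) := rfl
  simp [Mkl, this]

lemma Mkl_nonneg (ρ : Matrix (ι → Fin 2) (ι → Fin 2) ℂ) (k l : ι) : 0 ≤ Mkl ρ k l := by
  rw [Mkl_expand]; positivity

lemma Mkl_add_le (ψ : (ι → Fin 2) → ℂ) (hψ : UnitVec ψ) (k l p : ι)
    (hkl : k ≠ l) (hkp : k ≠ p) (hlp : l ≠ p) :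
    Mkl (pureDensity ψ) k l + Mkl (pureDensity ψ) k p ≤ 2 := by
  have h1 := four_bound ψ hψ k l p hkl hkp hlp 1 2 pauli_one_two pauli_two_one
  have h2 := four_bound ψ hψ k l p hkl hkp hlp 2 1 pauli_two_one pauli_one_two
  rw [Mkl_expand, Mkl_expand]
  linarith

lemma corr_symm (ρ : Matrix (ι → Fin 2) (ι → Fin 2) ℂ) (k l : ι) (hkl : k ≠ l) (i j : ℕ) :
    corr ρ k l i j = corr ρ l k j i := by
  unfold corr
  congr 4
  funext q
  by_cases h : q = k
  · subst h; simp [hkl]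
  · simp [h]

lemma Mkl_symm (ρ : Matrix (ι → Fin 2) (ι → Fin 2) ℂ) (k l : ι) (hkl : k ≠ l) :
    Mkl ρ k l = Mkl ρ l k := by
  rw [Mkl_expand, Mkl_expand, corr_symm ρ k l hkl, corr_symm ρ k l hkl, corr_symm ρ k l hkl,
    corr_symm ρ k l hkl]
  ring

lemma sum_le_card_of_pair (S : Finset ι) (hS : 2 ≤ S.card) (a : ι → ℝ)
    (h : ∀ l ∈ S, ∀ p ∈ S, l ≠ p → a l + a p ≤ 2) : ∑ l ∈ S, a l ≤ S.card := by
  by_cases hall : ∀ l ∈ S, a l ≤ 1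
  · calc _ ≤ ∑ l ∈ S, (1 : ℝ) := Finset.sum_le_sum hall
      _ = _ := by simp
  · push Not at hall
    obtain ⟨l, hl, hl1⟩ := hall
    obtain ⟨p, hp, hpl⟩ := Finset.exists_mem_ne (by omega : 1 < S.card) l
    have hp' : p ∈ S.erase l := Finset.mem_erase.mpr ⟨hpl, hp⟩
    rw [← Finset.add_sum_erase _ _ hl, ← Finset.add_sum_erase _ _ hp']
    have hle : ∑ x ∈ (S.erase l).erase p, a x ≤ ∑ x ∈ (S.erase l).erase p, (1 : ℝ) := by
      refine Finset.sum_le_sum fun x hx => ?_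
      have hx1 := Finset.mem_of_mem_erase hx
      have := h l hl x (Finset.mem_of_mem_erase hx1) (Finset.ne_of_mem_erase hx1).symm
      linarith
    have hc : ((S.erase l).erase p).card + 2 = S.card := by
      rw [Finset.card_erase_of_mem hp', Finset.card_erase_of_mem hl]; omega
    have hc' : (((S.erase l).erase p).card : ℝ) + 2 = S.card := by exact_mod_cast hc
    have := h l hl p hp hpl.symm
    simp only [Finset.sum_const, nsmul_eq_mul, mul_one] at hle
    linarith

end helpers

section product
variable {n k : ℕ}

lemma restrict_bij (P : Fin k → Finset (Fin n)) (hP : IsPartition P) :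
    Function.Bijective (fun (f : Fin n → Fin 2) (m : Fin k) => restrictB (P m) f) := by
  obtain ⟨_, hd, hc⟩ := hP
  constructor
  · intro f g hfg
    funext q
    obtain ⟨m, hm⟩ := hc q
    exact congrFun (congrFun hfg m) ⟨q, hm⟩
  · intro g
    choose c hcm using hc
    refine ⟨fun q => g (c q) ⟨q, hcm q⟩, ?_⟩
    funext m q
    have hcq : c q.1 = m := by
      by_contra hne
      exact (Finset.disjoint_left.mp (hd _ _ hne)) (hcm q.1) q.2
    have : ∀ m' (h : q.1 ∈ P m'), m' = m → g m' ⟨q.1, h⟩ = g m q := by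
      intro m' h hm'; subst hm'; rfl
    exact this _ (hcm q.1) hcq

lemma prod_blocks (P : Fin k → Finset (Fin n)) (hP : IsPartition P) (u : Fin n → ℂ) :
    ∏ q, u q = ∏ m, ∏ q : ↥(P m), u q.1 := by
  have hU : (Finset.univ : Finset (Fin n)) = Finset.univ.biUnion P := by
    ext q; simpa using hP.2.2 q
  rw [hU, Finset.prod_biUnion (fun m _ m' _ h => hP.2.1 m m' h)]
  refine Finset.prod_congr rfl fun m _ => ?_
  rw [Finset.prod_coe_sort]

lemma expv_prod (P : Fin k → Finset (Fin n)) (hP : IsPartition P)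
    (ψ : (Fin n → Fin 2) → ℂ) (φ : (m : Fin k) → ((↥(P m) → Fin 2) → ℂ))
    (h : ∀ f : Fin n → Fin 2, ψ f = ∏ m, φ m (restrictB (P m) f)) (F : Fin n → ℕ) :
    expv ψ F = ∏ m, expv (φ m) (fun q => F q.1) := by
  let e := Equiv.ofBijective _ (restrict_bij P hP)
  have hk : ∀ x y, kronOp F x y = ∏ m, kronOp (fun q : ↥(P m) => F q.1) (e x m) (e y m) := by
    intro x y
    simp only [kronOp, Matrix.of_apply]
    rw [prod_blocks P hP]
    rfl
  have hψ : ∀ x, ψ x = ∏ m, φ m (e x m) := h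
  simp only [expv, dotProduct, Matrix.mulVec, Pi.star_apply, hk, hψ]
  rw [Equiv.sum_comp e (fun g => star (∏ m, φ m (g m)) *
    ∑ y, (∏ m, kronOp (fun q : ↥(P m) => F q.1) (g m) (e y m)) * ∏ m, φ m (e y m))]
  rw [Finset.prod_univ_sum, Fintype.piFinset_univ]
  refine Finset.sum_congr rfl fun g _ => ?_
  rw [Equiv.sum_comp e (fun g' => (∏ m, kronOp (fun q : ↥(P m) => F q.1) (g m) (g' m)) *
    ∏ m, φ m (g' m)), Finset.prod_mul_distrib, star_prod, Finset.prod_univ_sum,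
    Fintype.piFinset_univ]
  simp only [Finset.prod_mul_distrib]

lemma corr_cross (P : Fin k → Finset (Fin n)) (hP : IsPartition P)
    (ψ : (Fin n → Fin 2) → ℂ) (hψ : UnitVec ψ) (hprod : IsProductOver ψ P)
    (a b : Fin n) (m : Fin k) (ha : a ∈ P m) (hb : b ∉ P m) (i j : ℕ)
    (h0 : bloch (pureDensity ψ) a i = 0) :
    corr (pureDensity ψ) a b i j = 0 := by
  obtain ⟨φ, _, hφ⟩ := hprod
  have hz : expv ψ (fun p => if p = a then i else 0) = 0 := by
    unfold bloch at h0
    rw [trace_eq_expv] at h0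
    exact Complex.ext h0 (expv_im _ _)
  have key : expv ψ (pairF a b i j) * expv ψ (fun _ => 0)
      = expv ψ (fun p => if p = a then i else 0) * expv ψ (fun p => if p = b then j else 0) := by
    simp only [expv_prod P hP ψ φ hφ, ← Finset.prod_mul_distrib]
    refine Finset.prod_congr rfl fun m' _ => ?_
    by_cases hm : m' = m
    · subst hm
      have hq : ∀ q : ↥(P m'), q.1 ≠ b := fun q h => hb (h ▸ q.2)
      simp only [pairF, hq, if_false]
    · have hq : ∀ q : ↥(P m'), q.1 ≠ a := fun q h =>
        Finset.disjoint_left.mp (hP.2.1 _ _ hm) (h ▸ q.2) ha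
      simp only [pairF, hq, if_false]
      rw [mul_comm]
  rw [expv_zero ψ hψ, hz, zero_mul, mul_one] at key
  rw [corr_eq, key]; rfl

lemma Mtot_two (ρ : Matrix (Fin n → Fin 2) (Fin n → Fin 2) ℂ) :
    2 * Mtot ρ = ∑ a, ∑ b ∈ Finset.univ.erase a, Mkl ρ a b := by
  have h1 : Mtot ρ = ∑ a, ∑ b, if a < b then Mkl ρ a b else 0 := by
    rw [Mtot, Finset.sum_filter, Fintype.sum_prod_type]
  have h2 : Mtot ρ = ∑ a, ∑ b, if b < a then Mkl ρ a b else 0 := by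
    rw [h1, Finset.sum_comm]
    refine Finset.sum_congr rfl fun a _ => Finset.sum_congr rfl fun b _ => ?_
    split_ifs with h
    · exact Mkl_symm _ _ _ h.ne
    · rfl
  rw [two_mul]
  nth_rewrite 1 [h1]
  rw [h2, ← Finset.sum_add_distrib]
  refine Finset.sum_congr rfl fun a _ => ?_
  rw [← Finset.sum_add_distrib, ← Finset.filter_ne', Finset.sum_filter]
  refine Finset.sum_congr rfl fun b _ => ?_
  rcases lt_trichotomy a b with h | h | h
  · simp [h, h.ne', h.not_gt]
  · simp [h]
  · simp [h, h.ne, h.not_gt]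

end product

theorem Mtot_le_of_kproduct (n : ℕ) (hn : 3 ≤ n) (k : ℕ)
    (P : Fin k → Finset (Fin n)) (hP : IsPartition P)
    (r : Fin k → ℕ) (hr : ∀ m, (P m).card = r m)
    (ψ : (Fin n → Fin 2) → ℂ) (hψ : UnitVec ψ)
    (hpb : PreferredBasis (pureDensity ψ))
    (hprod : IsProductOver ψ P) :
    Mtot (pureDensity ψ)
      ≤ (∑ m, ((r m).choose 2 : ℝ))
        + ((Finset.univ.filter (fun m => r m = 2)).card : ℝ) := by
  set ρ := pureDensity ψ with hρ
  have hrow : ∀ m, ∀ a ∈ P m, ∑ b ∈ Finset.univ.erase a, Mkl ρ a b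
      ≤ ((r m : ℝ) - 1) + if r m = 2 then 1 else 0 := by
    intro m a ha
    have hsub : ∑ b ∈ Finset.univ.erase a, Mkl ρ a b = ∑ b ∈ (P m).erase a, Mkl ρ a b := by
      symm
      refine Finset.sum_subset (Finset.erase_subset_erase _ (Finset.subset_univ _)) ?_
      intro b hb hb'
      have hbP : b ∉ P m := fun h => hb' (Finset.mem_erase.mpr ⟨Finset.ne_of_mem_erase hb, h⟩)
      have h1 := fun j => corr_cross P hP ψ hψ hprod a b m ha hbP 1 j (hpb a).1
      have h2 := fun j => corr_cross P hP ψ hψ hprod a b m ha hbP 2 j (hpb a).2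
      rw [Mkl_expand, h1, h1, h2, h2]; norm_num
    rw [hsub]
    have hcard : ((P m).erase a).card = r m - 1 := by
      rw [Finset.card_erase_of_mem ha, hr]
    have hpos : 1 ≤ r m := by rw [← hr]; exact Finset.card_pos.mpr ⟨a, ha⟩
    have hcR : (((P m).erase a).card : ℝ) = (r m : ℝ) - 1 := by
      rw [hcard, Nat.cast_sub hpos]; simp
    rcases Nat.lt_or_ge 2 (r m) with h3 | h3
    · rw [if_neg (by omega), add_zero, ← hcR]
      refine sum_le_card_of_pair _ (by omega) _ ?_
      intro l hl p hp hlp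
      exact Mkl_add_le ψ hψ a l p (Finset.ne_of_mem_erase hl).symm
        (Finset.ne_of_mem_erase hp).symm hlp
    · rcases Nat.lt_or_ge (r m) 2 with h4 | h4
      · have : r m = 1 := by omega
        have he : (P m).erase a = ∅ := Finset.card_eq_zero.mp (by omega)
        simp [he, this]
      · have h2 : r m = 2 := by omega
        obtain ⟨b, hb⟩ := Finset.card_eq_one.mp (by omega : ((P m).erase a).card = 1)
        have hba : b ≠ a := Finset.ne_of_mem_erase (hb ▸ Finset.mem_singleton_self b)
        obtain ⟨p, hp⟩ : ∃ p : Fin n, p ∉ ({a, b} : Finset (Fin n)) := by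
          by_contra hcon
          push Not at hcon
          have := Finset.card_le_card (fun x _ => hcon x : Finset.univ ⊆ ({a, b} : Finset (Fin n)))
          have h5 := Finset.card_le_two (a := a) (b := b)
          simp only [Finset.card_univ, Fintype.card_fin] at this
          omega
        simp only [Finset.mem_insert, Finset.mem_singleton, not_or] at hp
        have h6 := Mkl_add_le ψ hψ a b p hba.symm (Ne.symm hp.1) (Ne.symm hp.2)
        have h7 := Mkl_nonneg ρ a p
        rw [hb, Finset.sum_singleton, h2, if_pos rfl]
        push_cast
        linarith
  have hU : (Finset.univ : Finset (Fin n)) = Finset.univ.biUnion P := by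
    ext q; simpa using hP.2.2 q
  have htot : 2 * Mtot ρ ≤ ∑ m, (r m : ℝ) * (((r m : ℝ) - 1) + if r m = 2 then 1 else 0) := by
    rw [Mtot_two]
    have : ∑ a, ∑ b ∈ Finset.univ.erase a, Mkl ρ a b
        = ∑ m, ∑ a ∈ P m, ∑ b ∈ Finset.univ.erase a, Mkl ρ a b := by
      rw [← Finset.sum_biUnion (fun m _ m' _ h => hP.2.1 m m' h), ← hU]
    rw [this]
    refine Finset.sum_le_sum fun m _ => ?_
    refine (Finset.sum_le_sum (hrow m)).trans ?_
    rw [Finset.sum_const, hr, nsmul_eq_mul]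
  have hfin : ∑ m, (r m : ℝ) * (((r m : ℝ) - 1) + if r m = 2 then 1 else 0)
      = 2 * ((∑ m, ((r m).choose 2 : ℝ))
        + ((Finset.univ.filter (fun m => r m = 2)).card : ℝ)) := by
    rw [Finset.card_filter]
    push_cast
    rw [← Finset.sum_add_distrib, Finset.mul_sum]
    refine Finset.sum_congr rfl fun m _ => ?_
    rw [Nat.cast_choose_two]
    split_ifs with h
    · rw [h]; norm_num
    · ring
  linarith
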